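/- Let M₁ and M₂ be finite MDPs with the same discount factor γ ∈ [0,1), and let π₁ and π₂ be stochastic policies on M₁ and M₂ respectively (πᵢ maps each state of Sᵢ to a probability vector over Aᵢ). Define Rᵢ^{πᵢ}(s) = Σ_a πᵢ(a|s)·Rᵢ(s,a) and Pᵢ^{πᵢ}(s̃|s) = Σ_a πᵢ(a|s)·Pᵢ(s̃|s,a). Let the on-policy GBSM d_π^{1-2} be the pointwise supremum of the iterates from 0 of the map d ↦ |R₁^{π₁}(s) − R₂^{π₂}(s')| + γ·W₁(P₁^{π₁}(·|s), P₂^{π₂}(·|s'); d). If V₁^{π₁} and V₂^{π₂} satisfy the on-policy Bellman equations Vᵢ^{πᵢ}(s) = Rᵢ^{πᵢ}(s) + γ·Σ_{s̃} Pᵢ^{πᵢ}(s̃|s)·Vᵢ^{πᵢ}(s̃), then |V₁^{π₁}(s) − V₂^{π₂}(s')| ≤ d_π^{1-2}(s,s') for all (s,s') ∈ S₁ × S₂. -/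

import Mathlib

open scoped BigOperators

noncomputable section

/-- The (finite, linear-programming) 1-Wasserstein distance between probability
vectors `P` on `S₁` and `Q` on `S₂` with cost function `d`. -/
def W1 {S₁ S₂ : Type*} [Fintype S₁] [Fintype S₂]
    (P : S₁ → ℝ) (Q : S₂ → ℝ) (d : S₁ → S₂ → ℝ) : ℝ :=
  sInf { c : ℝ | ∃ lam : S₁ → S₂ → ℝ,
    (∀ i j, 0 ≤ lam i j) ∧ (∀ i, ∑ j, lam i j = P i) ∧
    (∀ j, ∑ i, lam i j = Q j) ∧ c = ∑ i, ∑ j, lam i j * d i j }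

/-- A finite Markov decision process (without its discount factor). -/
structure FinMDP (S A : Type*) [Fintype S] [Fintype A] where
  P : S → A → S → ℝ
  R : S → A → ℝ
  P_nonneg : ∀ s a s', 0 ≤ P s a s'
  P_sum : ∀ s a, ∑ s', P s a s' = 1

variable {S₁ A₁ S₂ A₂ : Type*} [Fintype S₁] [Fintype A₁] [Fintype S₂] [Fintype A₂]

/-- `δ(d)((s,a),(s',a')) = |R₁(s,a) − R₂(s',a')| + γ·W₁(P₁(·|s,a), P₂(·|s',a'); d)` -/
def gbsmDelta (M₁ : FinMDP S₁ A₁) (M₂ : FinMDP S₂ A₂) (γ : ℝ)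
    (d : S₁ → S₂ → ℝ) (s : S₁) (a : A₁) (s' : S₂) (a' : A₂) : ℝ :=
  |M₁.R s a - M₂.R s' a'| + γ * W1 (M₁.P s a) (M₂.P s' a') d

/-- The GBSM operator `F(d)(s,s') = H(X_s, X_{s'}; δ(d))` where `H` is the Hausdorff
metric between the finite sets `X_s = {(s,a)}`, `X_{s'} = {(s',a')}`. -/
def gbsmF (M₁ : FinMDP S₁ A₁) (M₂ : FinMDP S₂ A₂) (γ : ℝ)
    (d : S₁ → S₂ → ℝ) : S₁ → S₂ → ℝ :=
  fun s s' =>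
    max (⨆ a : A₁, ⨅ a' : A₂, gbsmDelta M₁ M₂ γ d s a s' a')
        (⨅ a : A₁, ⨆ a' : A₂, gbsmDelta M₁ M₂ γ d s a s' a')

/-- The GBSM: pointwise supremum of the iterates of `gbsmF` from the zero function. -/
def gbsm (M₁ : FinMDP S₁ A₁) (M₂ : FinMDP S₂ A₂) (γ : ℝ) : S₁ → S₂ → ℝ :=
  fun s s' => ⨆ n : ℕ, (gbsmF M₁ M₂ γ)^[n] (fun _ _ => 0) s s'


/-- One step of the on-policy GBSM operator for stochastic policies `π₁`, `π₂`. -/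
def onPolicyOp (M₁ : FinMDP S₁ A₁) (M₂ : FinMDP S₂ A₂) (γ : ℝ)
    (π₁ : S₁ → A₁ → ℝ) (π₂ : S₂ → A₂ → ℝ) (d : S₁ → S₂ → ℝ) : S₁ → S₂ → ℝ :=
  fun s s' =>
    |(∑ a, π₁ s a * M₁.R s a) - ∑ a', π₂ s' a' * M₂.R s' a'| +
      γ * W1 (fun t => ∑ a, π₁ s a * M₁.P s a t)
             (fun t => ∑ a', π₂ s' a' * M₂.P s' a' t) d

/-- The on-policy GBSM: pointwise supremum of the iterates of `onPolicyOp` from 0. -/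
def onPolicyGbsm (M₁ : FinMDP S₁ A₁) (M₂ : FinMDP S₂ A₂) (γ : ℝ)
    (π₁ : S₁ → A₁ → ℝ) (π₂ : S₂ → A₂ → ℝ) : S₁ → S₂ → ℝ :=
  fun s s' => ⨆ n : ℕ, (onPolicyOp M₁ M₂ γ π₁ π₂)^[n] (fun _ _ => 0) s s'

theorem W1_set_nonempty {S₁ S₂ : Type*} [Fintype S₁] [Fintype S₂]
    (P : S₁ → ℝ) (Q : S₂ → ℝ) (d : S₁ → S₂ → ℝ)
    (hP : ∀ i, 0 ≤ P i) (hQ : ∀ i, 0 ≤ Q i) (hP1 : ∑ i, P i = 1) (hQ1 : ∑ i, Q i = 1) :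
    { c : ℝ | ∃ lam : S₁ → S₂ → ℝ,
    (∀ i j, 0 ≤ lam i j) ∧ (∀ i, ∑ j, lam i j = P i) ∧
    (∀ j, ∑ i, lam i j = Q j) ∧ c = ∑ i, ∑ j, lam i j * d i j }.Nonempty := by
  refine ⟨_, fun i j => P i * Q j, fun i j => mul_nonneg (hP i) (hQ j), fun i => ?_,
    fun j => ?_, rfl⟩
  · rw [← Finset.mul_sum, hQ1, mul_one]
  · rw [← Finset.sum_mul, hP1, one_mul]

theorem W1_nonneg' {S₁ S₂ : Type*} [Fintype S₁] [Fintype S₂]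
    (P : S₁ → ℝ) (Q : S₂ → ℝ) (d : S₁ → S₂ → ℝ) (hd : ∀ i j, 0 ≤ d i j) :
    0 ≤ W1 P Q d := by
  apply Real.sInf_nonneg
  rintro c ⟨lam, h0, -, -, rfl⟩
  exact Finset.sum_nonneg fun i _ => Finset.sum_nonneg fun j _ => mul_nonneg (h0 i j) (hd i j)

theorem W1_le' {S₁ S₂ : Type*} [Fintype S₁] [Fintype S₂]
    (P : S₁ → ℝ) (Q : S₂ → ℝ) (d : S₁ → S₂ → ℝ) (B : ℝ)
    (hP : ∀ i, 0 ≤ P i) (hQ : ∀ i, 0 ≤ Q i) (hP1 : ∑ i, P i = 1) (hQ1 : ∑ i, Q i = 1)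
    (hd : ∀ i j, 0 ≤ d i j) (hB : ∀ i j, d i j ≤ B) :
    W1 P Q d ≤ B := by
  obtain ⟨c, hc⟩ := W1_set_nonempty P Q d hP hQ hP1 hQ1
  refine (csInf_le ⟨0, ?_⟩ hc).trans ?_
  · rintro c ⟨lam, h0, -, -, rfl⟩
    exact Finset.sum_nonneg fun i _ => Finset.sum_nonneg fun j _ => mul_nonneg (h0 i j) (hd i j)
  · obtain ⟨lam, h0, h1, -, rfl⟩ := hc
    calc ∑ i, ∑ j, lam i j * d i j ≤ ∑ i, ∑ j, lam i j * B :=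
          Finset.sum_le_sum fun i _ => Finset.sum_le_sum fun j _ =>
            mul_le_mul_of_nonneg_left (hB i j) (h0 i j)
      _ = B := by simp_rw [← Finset.sum_mul, h1, hP1, one_mul]

theorem abs_le_W1 {S₁ S₂ : Type*} [Fintype S₁] [Fintype S₂]
    (P : S₁ → ℝ) (Q : S₂ → ℝ) (d : S₁ → S₂ → ℝ) (e : ℝ) (V₁ : S₁ → ℝ) (V₂ : S₂ → ℝ)
    (hP : ∀ i, 0 ≤ P i) (hQ : ∀ i, 0 ≤ Q i) (hP1 : ∑ i, P i = 1) (hQ1 : ∑ i, Q i = 1)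
    (h : ∀ i j, |V₁ i - V₂ j| ≤ d i j + e) :
    |∑ i, P i * V₁ i - ∑ j, Q j * V₂ j| ≤ W1 P Q d + e := by
  rw [← sub_le_iff_le_add]
  refine le_csInf (W1_set_nonempty P Q d hP hQ hP1 hQ1) ?_
  rintro c ⟨lam, h0, h1, h2, rfl⟩
  rw [sub_le_iff_le_add]
  have e1 : ∑ i, P i * V₁ i - ∑ j, Q j * V₂ j = ∑ i, ∑ j, lam i j * (V₁ i - V₂ j) := by
    simp_rw [mul_sub, Finset.sum_sub_distrib, ← h1, ← h2, Finset.sum_mul]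
    rw [Finset.sum_comm (f := fun j i => lam i j * V₂ j)]
  have e2 : ∑ i, ∑ j, lam i j * d i j + e = ∑ i, ∑ j, lam i j * (d i j + e) := by
    simp_rw [mul_add, Finset.sum_add_distrib, ← Finset.sum_mul, h1, hP1, one_mul]
  rw [e1, e2]
  refine (Finset.abs_sum_le_sum_abs _ _).trans (Finset.sum_le_sum fun i _ => ?_)
  refine (Finset.abs_sum_le_sum_abs _ _).trans (Finset.sum_le_sum fun j _ => ?_)
  rw [abs_mul, abs_of_nonneg (h0 i j)]
  exact mul_le_mul_of_nonneg_left (h i j) (h0 i j)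

theorem mix_nonneg {S A : Type*} [Fintype S] [Fintype A] (M : FinMDP S A) (p : S → A → ℝ)
    (h0 : ∀ s a, 0 ≤ p s a) (s t : S) : 0 ≤ ∑ a, p s a * M.P s a t :=
  Finset.sum_nonneg fun a _ => mul_nonneg (h0 s a) (M.P_nonneg s a t)

theorem mix_sum {S A : Type*} [Fintype S] [Fintype A] (M : FinMDP S A) (p : S → A → ℝ)
    (h1 : ∀ s, ∑ a, p s a = 1) (s : S) : ∑ t, ∑ a, p s a * M.P s a t = 1 := by
  rw [Finset.sum_comm]
  simp_rw [← Finset.mul_sum, M.P_sum, mul_one, h1]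

theorem mix_R {S A : Type*} [Fintype S] [Fintype A] (M : FinMDP S A) (p : S → A → ℝ)
    (h0 : ∀ s a, 0 ≤ p s a) (h1 : ∀ s, ∑ a, p s a = 1) (B : ℝ)
    (hR : ∀ s a, 0 ≤ M.R s a ∧ M.R s a ≤ B) (s : S) :
    0 ≤ ∑ a, p s a * M.R s a ∧ ∑ a, p s a * M.R s a ≤ B := by
  refine ⟨Finset.sum_nonneg fun a _ => mul_nonneg (h0 s a) (hR s a).1, ?_⟩
  calc ∑ a, p s a * M.R s a ≤ ∑ a, p s a * B :=
        Finset.sum_le_sum fun a _ => mul_le_mul_of_nonneg_left (hR s a).2 (h0 s a)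
    _ = B := by rw [← Finset.sum_mul, h1, one_mul]

/-- the on-policy GBSM bounds the difference of on-policy value
functions. -/
theorem onPolicyGbsm_value_bound
    [Nonempty S₁] [Nonempty A₁] [Nonempty S₂] [Nonempty A₂]
    (M₁ : FinMDP S₁ A₁) (M₂ : FinMDP S₂ A₂) (γ Rbar : ℝ)
    (hγ0 : 0 ≤ γ) (hγ1 : γ < 1) (hRbar : 0 < Rbar)
    (hR₁ : ∀ s a, 0 ≤ M₁.R s a ∧ M₁.R s a ≤ Rbar)
    (hR₂ : ∀ s a, 0 ≤ M₂.R s a ∧ M₂.R s a ≤ Rbar)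
    (π₁ : S₁ → A₁ → ℝ) (π₂ : S₂ → A₂ → ℝ)
    (hπ₁0 : ∀ s a, 0 ≤ π₁ s a) (hπ₁1 : ∀ s, ∑ a, π₁ s a = 1)
    (hπ₂0 : ∀ s' a', 0 ≤ π₂ s' a') (hπ₂1 : ∀ s', ∑ a', π₂ s' a' = 1)
    (V₁ : S₁ → ℝ) (V₂ : S₂ → ℝ)
    (hV₁ : ∀ s, V₁ s =
      (∑ a, π₁ s a * M₁.R s a) +
        γ * ∑ t, (∑ a, π₁ s a * M₁.P s a t) * V₁ t)
    (hV₂ : ∀ s', V₂ s' =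
      (∑ a', π₂ s' a' * M₂.R s' a') +
        γ * ∑ t, (∑ a', π₂ s' a' * M₂.P s' a' t) * V₂ t) :
    ∀ (s : S₁) (s' : S₂), |V₁ s - V₂ s'| ≤ onPolicyGbsm M₁ M₂ γ π₁ π₂ s s' := by
  have hb : ∀ n s s', 0 ≤ (onPolicyOp M₁ M₂ γ π₁ π₂)^[n] (fun _ _ => 0) s s' ∧
      (onPolicyOp M₁ M₂ γ π₁ π₂)^[n] (fun _ _ => 0) s s' ≤ Rbar / (1 - γ) := by
    have h1γ : 0 < 1 - γ := by linarith
    intro n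
    induction n with
    | zero => intro s s'; exact ⟨le_rfl, (div_pos hRbar h1γ).le⟩
    | succ n ih =>
      intro s s'
      rw [Function.iterate_succ_apply']
      unfold onPolicyOp at ih ⊢
      have r1 := mix_R M₁ π₁ hπ₁0 hπ₁1 Rbar hR₁ s
      have r2 := mix_R M₂ π₂ hπ₂0 hπ₂1 Rbar hR₂ s'
      refine ⟨add_nonneg (abs_nonneg _) (mul_nonneg hγ0
        (W1_nonneg' _ _ _ fun i j => (ih i j).1)), ?_⟩
      have hw := W1_le' _ _ _ _ (mix_nonneg M₁ π₁ hπ₁0 s) (mix_nonneg M₂ π₂ hπ₂0 s')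
        (mix_sum M₁ π₁ hπ₁1 s) (mix_sum M₂ π₂ hπ₂1 s') (fun i j => (ih i j).1)
        (fun i j => (ih i j).2)
      have hr : |(∑ a, π₁ s a * M₁.R s a) - ∑ a', π₂ s' a' * M₂.R s' a'| ≤ Rbar :=
        abs_le.2 ⟨by linarith, by linarith⟩
      have he : Rbar / (1 - γ) = Rbar + γ * (Rbar / (1 - γ)) := by
        field_simp
        ring
      rw [he]
      exact add_le_add hr (mul_le_mul_of_nonneg_left hw hγ0)
  obtain ⟨C, hC⟩ : ∃ C, ∀ s s', |V₁ s - V₂ s'| ≤ C := by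
    obtain ⟨C, hC⟩ := (Set.finite_range fun q : S₁ × S₂ => |V₁ q.1 - V₂ q.2|).bddAbove
    exact ⟨C, fun s s' => hC ⟨(s, s'), rfl⟩⟩
  have key : ∀ n s s', |V₁ s - V₂ s'| ≤
      (onPolicyOp M₁ M₂ γ π₁ π₂)^[n] (fun _ _ => 0) s s' + γ ^ n * C := by
    intro n
    induction n with
    | zero => intro s s'; simpa using hC s s'
    | succ n ih =>
      intro s s'
      rw [Function.iterate_succ_apply']
      have hw := abs_le_W1 _ _ _ _ V₁ V₂ (mix_nonneg M₁ π₁ hπ₁0 s) (mix_nonneg M₂ π₂ hπ₂0 s')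
        (mix_sum M₁ π₁ hπ₁1 s) (mix_sum M₂ π₂ hπ₂1 s') ih
      generalize (onPolicyOp M₁ M₂ γ π₁ π₂)^[n] (fun _ _ => 0) = d at hw
      unfold onPolicyOp
      rw [hV₁ s, hV₂ s', add_sub_add_comm, ← mul_sub]
      refine (abs_add_le _ _).trans ?_
      rw [abs_mul, abs_of_nonneg hγ0, add_assoc, pow_succ', mul_assoc, ← mul_add]
      exact add_le_add le_rfl (mul_le_mul_of_nonneg_left hw hγ0)
  intro s s'
  have ht : Filter.Tendsto (fun n : ℕ => onPolicyGbsm M₁ M₂ γ π₁ π₂ s s' + γ ^ n * C)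
      Filter.atTop (nhds (onPolicyGbsm M₁ M₂ γ π₁ π₂ s s' + 0 * C)) :=
    ((tendsto_pow_atTop_nhds_zero_of_lt_one hγ0 hγ1).mul_const C).const_add _
  rw [zero_mul, add_zero] at ht
  refine ge_of_tendsto' ht fun n => (key n s s').trans ?_
  refine add_le_add ?_ le_rfl
  exact le_ciSup (f := fun n : ℕ => (onPolicyOp M₁ M₂ γ π₁ π₂)^[n] (fun _ _ => 0) s s')
    ⟨Rbar / (1 - γ), by rintro _ ⟨m, rfl⟩; exact (hb m s s').2⟩ n

end
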